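/- As n → ∞ over the positive integers, (1/(2n))·tan(π/(2n) − (1/2)·arcsin((1/2)·sin(2π/n))) = π³/(8n⁴) + O(1/n⁶); that is, the function n ↦ (1/(2n))·tan(π/(2n) − (1/2)·arcsin((1/2)·sin(2π/n))) − π³/(8n⁴) is O(n⁻⁶) along the filter atTop. -/

import Mathlib

open Real Filter Asymptotics

lemma aux_pow_le {m k : ℕ} (h : k ≤ m) :
    (fun t : ℝ => t ^ m) =O[nhds 0] (fun t : ℝ => t ^ k) := by
  refine IsBigO.of_bound 1 ?_
  filter_upwards [Metric.ball_mem_nhds (0:ℝ) one_pos] with t ht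
  have ht : |t| < 1 := by simpa using ht
  simp only [norm_pow, Real.norm_eq_abs, one_mul]
  exact pow_le_pow_of_le_one (abs_nonneg t) ht.le h

lemma aux_sin : (fun t : ℝ => sin t - (t - t ^ 3 / 6)) =O[nhds 0] (fun t : ℝ => t ^ 5) := by
  refine IsBigO.of_bound (1/100) ?_
  filter_upwards [Metric.ball_mem_nhds (0:ℝ) one_pos] with t ht
  have ht : |t| < 1 := by simpa using ht
  have := sin_bound ht.le
  simp only [norm_pow, Real.norm_eq_abs]
  linarith

lemma aux_cos : (fun t : ℝ => 1 - cos t) =O[nhds 0] (fun t : ℝ => t ^ 2) := by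
  refine IsBigO.of_bound (1/2) ?_
  refine Eventually.of_forall fun t => ?_
  have := Real.one_sub_sq_div_two_le_cos (x := t)
  have := Real.cos_le_one t
  simp only [norm_pow, Real.norm_eq_abs, sq_abs]
  rw [abs_of_nonneg (by linarith)]
  linarith

lemma aux_sin3 : (fun t : ℝ => sin t - t) =O[nhds 0] (fun t : ℝ => t ^ 3) := by
  have h := (aux_sin.trans (aux_pow_le (show 3 ≤ 5 by norm_num))).sub
    ((isBigO_refl (fun t : ℝ => t ^ 3) (nhds 0)).const_mul_left (1/6))
  exact h.congr_left fun t => by ring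

lemma aux_tan : (fun t : ℝ => tan t - t) =O[nhds 0] (fun t : ℝ => t ^ 2) := by
  have h1 : (fun t : ℝ => (cos t)⁻¹) =O[nhds 0] (fun _ : ℝ => (1:ℝ)) := by
    have : ContinuousAt (fun t : ℝ => (cos t)⁻¹) 0 :=
      continuous_cos.continuousAt.inv₀ (by simp)
    exact this.tendsto.isBigO_one ℝ
  have h2 : (fun t : ℝ => t * (1 - cos t)) =O[nhds 0] (fun t : ℝ => t ^ 3) :=
    ((isBigO_refl (fun t : ℝ => t) (nhds 0)).mul aux_cos).congr_right fun t => by ring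
  have h3 := (h1.mul (aux_sin3.add h2)).congr_right (fun t => one_mul _)
  refine IsBigO.trans (IsBigO.congr' h3 ?_ EventuallyEq.rfl) (aux_pow_le (show 2 ≤ 3 by norm_num))
  have : ∀ᶠ t : ℝ in nhds 0, cos t ≠ 0 :=
    continuous_cos.continuousAt.eventually_ne (by simp)
  filter_upwards [this] with t ht
  rw [tan_eq_sin_div_cos]
  field_simp
  ring

/-- If `a - b = O(x^3)`, `a, b = O(x)`, then `a^3 - b^3 = O(x^5)`. -/
lemma aux_cube {a b : ℝ → ℝ} (ha : a =O[nhds 0] (fun t : ℝ => t))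
    (hb : b =O[nhds 0] (fun t : ℝ => t))
    (hab : (fun t => a t - b t) =O[nhds 0] (fun t : ℝ => t ^ 3)) :
    (fun t => a t ^ 3 - b t ^ 3) =O[nhds 0] (fun t : ℝ => t ^ 5) := by
  have h1 : (fun t => a t * a t + a t * b t + b t * b t) =O[nhds 0] (fun t : ℝ => t * t) :=
    ((ha.mul ha).add (ha.mul hb)).add (hb.mul hb)
  exact (hab.mul h1).congr (fun t => by ring) (fun t => by ring)

lemma aux_arcsin : (fun y : ℝ => arcsin y - (y + y ^ 3 / 6)) =O[nhds 0] (fun t : ℝ => t ^ 5) := by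
  have ha : arcsin =O[nhds 0] (fun t : ℝ => t) := by
    have := (Real.hasDerivAt_arcsin (x := 0) (by norm_num) (by norm_num)).isBigO_sub
    simpa using this
  have hT : Tendsto arcsin (nhds 0) (nhds 0) := by
    simpa using (Real.continuous_arcsin.tendsto 0)
  have hs : ∀ᶠ y : ℝ in nhds 0, sin (arcsin y) = y := by
    filter_upwards [Icc_mem_nhds (show (-1:ℝ) < 0 by norm_num) (show (0:ℝ) < 1 by norm_num)] with y hy
    exact sin_arcsin hy.1 hy.2
  have h5 : (fun y => y - (arcsin y - arcsin y ^ 3 / 6)) =O[nhds 0] (fun t : ℝ => t ^ 5) := by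
    refine ((aux_sin.comp_tendsto hT).trans (ha.pow 5)).congr' ?_ EventuallyEq.rfl
    filter_upwards [hs] with y hy
    simp [hy]
  have h3 : (fun y => arcsin y - y) =O[nhds 0] (fun t : ℝ => t ^ 3) := by
    refine (((ha.pow 3).const_mul_left (1/6)).sub
      (h5.trans (aux_pow_le (show 3 ≤ 5 by norm_num)))).congr_left fun t => by ring
  exact (((aux_cube ha (isBigO_refl _ _) h3).const_mul_left (1/6)).sub h5).congr_left
    fun t => by ring

lemma aux_main : (fun x : ℝ => tan (x / 2 - (1 / 2) * arcsin ((1 / 2) * sin (2 * x))) - x ^ 3 / 4)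
    =O[nhds 0] (fun x : ℝ => x ^ 5) := by
  have h2 : Tendsto (fun x : ℝ => 2 * x) (nhds 0) (nhds 0) := by
    have : Continuous (fun x : ℝ => 2 * x) := by fun_prop
    simpa using this.tendsto 0
  have hy5 : (fun x : ℝ => (1 / 2) * sin (2 * x) - (x - 2 / 3 * x ^ 3))
      =O[nhds 0] (fun x : ℝ => x ^ 5) := by
    have h := (aux_sin.comp_tendsto h2).trans
      (((isBigO_refl (fun x : ℝ => x) (nhds 0)).const_mul_left 2).pow 5)
    refine (h.const_mul_left (1/2)).congr_left fun x => ?_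
    simp only [Function.comp]
    ring
  have hr (k : ℕ) := isBigO_refl (fun x : ℝ => x ^ k) (nhds 0)
  have hy3 : (fun x : ℝ => (1 / 2) * sin (2 * x) - x) =O[nhds 0] (fun x : ℝ => x ^ 3) :=
    ((hy5.trans (aux_pow_le (show 3 ≤ 5 by norm_num))).sub
      ((hr 3).const_mul_left (2/3))).congr_left fun x => by ring
  have hy1 : (fun x : ℝ => (1 / 2) * sin (2 * x)) =O[nhds 0] (fun x : ℝ => x) :=
    ((hy3.trans (aux_pow_le (show 1 ≤ 3 by norm_num))).add (hr 1)).congr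
      (fun x => by ring) (fun x => by ring)
  have hc := aux_cube hy1 (isBigO_refl _ _) hy3
  have hyT : Tendsto (fun x : ℝ => (1 / 2) * sin (2 * x)) (nhds 0) (nhds 0) :=
    hy1.trans_tendsto tendsto_id
  have hA := (aux_arcsin.comp_tendsto hyT).trans (hy1.pow 5)
  have hu5 : (fun x : ℝ => (x / 2 - (1 / 2) * arcsin ((1 / 2) * sin (2 * x))) - x ^ 3 / 4)
      =O[nhds 0] (fun x : ℝ => x ^ 5) := by
    refine (((hA.add hy5).add (hc.const_mul_left (1/6))).const_mul_left (-1/2)).congr_left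
      fun x => ?_
    simp only [Function.comp]
    ring
  have hu3 : (fun x : ℝ => x / 2 - (1 / 2) * arcsin ((1 / 2) * sin (2 * x)))
      =O[nhds 0] (fun x : ℝ => x ^ 3) :=
    ((hu5.trans (aux_pow_le (show 3 ≤ 5 by norm_num))).add
      ((hr 3).const_mul_left (1/4))).congr_left fun x => by ring
  have huT : Tendsto (fun x : ℝ => x / 2 - (1 / 2) * arcsin ((1 / 2) * sin (2 * x)))
      (nhds 0) (nhds 0) := by
    refine hu3.trans_tendsto ?_
    simpa using (continuous_pow 3).tendsto (0:ℝ)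
  have ht := ((aux_tan.comp_tendsto huT).trans (hu3.pow 2)).trans
    ((aux_pow_le (show 5 ≤ 6 by norm_num)).congr_left fun x => by ring)
  refine (ht.add hu5).congr_left fun x => ?_
  simp only [Function.comp]
  ring

/-- Asymptotics of the width gap for the unit-perimeter rescaling of `B_n`:
`(1/(2n)) tan(π/(2n) − (1/2) arcsin((1/2) sin(2π/n))) = π³/(8n⁴) + O(1/n⁶)` as `n → ∞`. -/
theorem width_gap_unit_perimeter_Bn_asymptotics :
    (fun n : ℕ =>
        (1 / (2 * (n : ℝ))) *
          tan (π / (2 * n) - (1 / 2) * arcsin ((1 / 2) * sin (2 * π / n))) -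
          π ^ 3 / (8 * (n : ℝ) ^ 4)) =O[atTop]
      (fun n : ℕ => 1 / (n : ℝ) ^ 6) := by
  have hT : Tendsto (fun n : ℕ => π / (n : ℝ)) atTop (nhds 0) :=
    tendsto_const_div_atTop_nhds_zero_nat π
  have h := (isBigO_refl (fun n : ℕ => 1 / (n : ℝ)) atTop).mul (aux_main.comp_tendsto hT)
  have h' := (h.const_mul_left (1/2)).congr_right
    (g₂ := fun n : ℕ => π ^ 5 * (1 / (n : ℝ) ^ 6)) (fun n => by
      simp only [Function.comp]
      rw [div_pow]
      ring)
  refine (h'.trans (isBigO_const_mul_self _ _ _)).congr_left fun n => ?_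
  simp only [Function.comp]
  rw [show π / (n:ℝ) / 2 = π / (2 * n) by rw [div_div, mul_comm],
    show 2 * (π / (n:ℝ)) = 2 * π / n by ring]
  rw [div_pow]
  ring
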